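/- arXiv:2011.05451 — 9 statements merged into one kernel-verified Lean document; each statement's English description precedes it below -/
import Mathlib

section
/- Let L ≥ 1 be odd and let f_0, …, f_{L−1} : ℝ → ℂ be continuous 1-periodic functions, each with an absolutely convergent Fourier series. Then ∫_{[0,1]^L} ∏_{i=0}^{L−1} f_i(x_{(i+1) mod L} − x_{(i−1) mod L}) dx_0⋯dx_{L−1} = ∑_{ℓ∈ℤ} ∏_{i=0}^{L−1} f̂_i(ℓ). -/
open MeasureTheory

/-- The `ℓ`-th Fourier coefficient of a 1-periodic function `f : ℝ → ℂ`,
`f̂(ℓ) = ∫₀¹ f(x) e^{−2πiℓx} dx`. -/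
noncomputable def fourierCoeffR (f : ℝ → ℂ) (ℓ : ℤ) : ℂ :=
  ∫ x in (0:ℝ)..1, f x * Complex.exp (-(2 * Real.pi * Complex.I * ℓ * x))

/-- The product of finitely many absolutely convergent series is the absolutely convergent series
of products over all multi-indices. -/
theorem summable_norm_prod_and_prod_tsum {ι R : Type*} [NormedCommRing R] [NormOneClass R]
    [CompleteSpace R] :
    ∀ (n : ℕ) (a : Fin n → ι → R), (∀ i, Summable fun l => ‖a i l‖) →
      (Summable fun m : Fin n → ι => ‖∏ i, a i (m i)‖) ∧
        ∏ i, ∑' l, a i l = ∑' m : Fin n → ι, ∏ i, a i (m i)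
  | 0, a, _ => by
    refine ⟨(hasSum_fintype _).summable, ?_⟩
    simp [tsum_fintype]
  | n + 1, a, h => by
    obtain ⟨hs, ht⟩ := summable_norm_prod_and_prod_tsum n (fun i => a i.succ) fun i => h i.succ
    have key (p : ι × (Fin n → ι)) :
        ∏ i, a i (Fin.consEquiv (fun _ => ι) p i) = a 0 p.1 * ∏ i : Fin n, a i.succ (p.2 i) := by
      simp [Fin.prod_univ_succ, Fin.consEquiv]
    constructor
    · rw [← (Fin.consEquiv fun _ => ι).summable_iff]
      simpa only [Function.comp_def, key] using (h 0).mul_norm hs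
    · rw [Fin.prod_univ_succ, ht, tsum_mul_tsum_of_summable_norm (h 0) hs,
        ← (Fin.consEquiv fun _ => ι).tsum_eq]
      simp only [key]

theorem integral_exp_two_pi_int (k : ℤ) :
    ∫ x in Set.Icc (0 : ℝ) 1, Complex.exp (2 * Real.pi * Complex.I * k * x) =
      if k = 0 then 1 else 0 := by
  rw [integral_Icc_eq_integral_Ioc, ← intervalIntegral.integral_of_le zero_le_one]
  split_ifs with hk
  · simp [hk]
  · have hc : 2 * Real.pi * Complex.I * (k : ℂ) ≠ 0 :=
      mul_ne_zero Complex.two_pi_I_ne_zero (Int.cast_ne_zero.mpr hk)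
    rw [integral_exp_mul_complex hc]
    have : Complex.exp (2 * Real.pi * Complex.I * k) = 1 :=
      Complex.exp_eq_one_iff.mpr ⟨k, by ring⟩
    simp [this]

/-- The characters of the cube `[0,1]^ι` are orthonormal. -/
theorem integral_prod_exp_two_pi_int {ι : Type*} [Fintype ι] (k : ι → ℤ) :
    ∫ x in Set.Icc (0 : ι → ℝ) 1, ∏ j, Complex.exp (2 * Real.pi * Complex.I * k j * x j) =
      if ∀ j, k j = 0 then 1 else 0 := by
  have hμ : (volume : Measure (ι → ℝ)).restrict (Set.Icc 0 1) =
      Measure.pi fun _ => (volume : Measure ℝ).restrict (Set.Icc 0 1) := by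
    rw [← Measure.restrict_pi_pi, ← volume_pi]
    congr 1
    exact (Set.pi_univ_Icc _ _).symm
  rw [hμ, integral_fintype_prod_eq_prod
    (f := fun j (x : ℝ) => Complex.exp (2 * Real.pi * Complex.I * k j * x))]
  simp only [integral_exp_two_pi_int]
  split_ifs with h
  · simp [h]
  · push Not at h
    obtain ⟨j, hj⟩ := h
    exact Finset.prod_eq_zero (Finset.mem_univ j) (if_neg hj)

open scoped Fin.CommRing in
theorem Fin.eq_of_forall_sub_one_eq_add_one {α : Type*} {L : ℕ} [NeZero L] (hodd : Odd L)
    {m : Fin L → α} (h : ∀ j, m (j - 1) = m (j + 1)) (j : Fin L) : m j = m 0 := by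
  have step (j : Fin L) : m (j + 2 • 1) = m j := by
    have := h (j + 1)
    rw [add_sub_cancel_right] at this
    rw [this, two_nsmul, add_assoc]
  have steps (n : ℕ) (j : Fin L) : m (j + (n * 2) • 1) = m j := by
    induction n with
    | zero => simp
    | succ n ih => rw [add_mul, one_mul, add_nsmul, ← add_assoc, step, ih]
  have hL : L • (1 : Fin L) = 0 := by
    simp
  obtain ⟨k, hk⟩ := hodd
  have one (j : Fin L) : m (j + 1) = m j := by
    rw [← steps (k + 1) j, show (k + 1) * 2 = L + 1 by omega, add_nsmul, hL, zero_add, one_nsmul]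
  have ones (n : ℕ) : m (n • 1) = m 0 := by
    induction n with
    | zero => simp
    | succ n ih => rw [succ_nsmul, one, ih]
  have := ones j.val
  rwa [nsmul_one, Fin.cast_val_eq_self] at this

theorem stmt1 (L : ℕ) [NeZero L] (hodd : Odd L) (f : Fin L → ℝ → ℂ)
    (hcont : ∀ i, Continuous (f i))
    (hper : ∀ i (x : ℝ), f i (x + 1) = f i x)
    (habs : ∀ i, Summable fun ℓ : ℤ => ‖fourierCoeffR (f i) ℓ‖)
    (hrep : ∀ i (x : ℝ),
      f i x = ∑' ℓ : ℤ, fourierCoeffR (f i) ℓ * Complex.exp (2 * Real.pi * Complex.I * ℓ * x)) :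
    (∫ x in Set.Icc (0 : Fin L → ℝ) 1, ∏ i, f i (x (i + 1) - x (i - 1))) =
      ∑' ℓ : ℤ, ∏ i, fourierCoeffR (f i) ℓ := by
  have norm_exp (l : ℤ) (t : ℝ) : ‖Complex.exp (2 * Real.pi * Complex.I * l * t)‖ = 1 := by
    rw [show 2 * Real.pi * Complex.I * l * t = ((2 * Real.pi * l * t : ℝ) : ℂ) * Complex.I by
      push_cast; ring, Complex.norm_exp_ofReal_mul_I]
  have regroup (m : Fin L → ℤ) (x : Fin L → ℝ) :
      ∏ i, Complex.exp (2 * Real.pi * Complex.I * m i * ↑(x (i + 1) - x (i - 1))) =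
        ∏ j, Complex.exp (2 * Real.pi * Complex.I * ↑(m (j - 1) - m (j + 1)) * x j) := by
    simp only [← Complex.exp_sum]
    congr 1
    push_cast
    simp only [mul_sub, sub_mul, Finset.sum_sub_distrib]
    congr 1
    · rw [← Equiv.sum_comp (Equiv.addRight (1 : Fin L)) fun j =>
        2 * Real.pi * Complex.I * (m (j - 1) : ℂ) * (x j : ℂ)]
      simp
    · rw [← Equiv.sum_comp (Equiv.subRight (1 : Fin L)) fun j =>
        2 * Real.pi * Complex.I * (m (j + 1) : ℂ) * (x j : ℂ)]
      simp
  let F (m : Fin L → ℤ) (x : Fin L → ℝ) : ℂ := (∏ i, fourierCoeffR (f i) (m i)) *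
    ∏ j, Complex.exp (2 * Real.pi * Complex.I * ↑(m (j - 1) - m (j + 1)) * x j)
  have expand (x : Fin L → ℝ) : ∏ i, f i (x (i + 1) - x (i - 1)) = ∑' m, F m x := by
    simp only [hrep]
    rw [(summable_norm_prod_and_prod_tsum L _ fun i => ?_).2]
    · simp only [Finset.prod_mul_distrib, regroup, F]
    · simpa only [norm_mul, norm_exp, mul_one] using habs i
  have integrable_F (m : Fin L → ℤ) : IntegrableOn (F m) (Set.Icc 0 1) := by
    refine Continuous.integrableOn_Icc ?_
    fun_prop
  have norm_F (m : Fin L → ℤ) (x : Fin L → ℝ) :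
      ‖F m x‖ = ‖∏ i, fourierCoeffR (f i) (m i)‖ := by
    simp only [F, norm_mul, norm_prod, norm_exp, Finset.prod_const_one, mul_one]
  have summable_F : Summable fun m => ∫ x in Set.Icc (0 : Fin L → ℝ) 1, ‖F m x‖ := by
    simp only [norm_F, setIntegral_const]
    exact (summable_norm_prod_and_prod_tsum L _ habs).1.const_smul _
  have integral_F (m : Fin L → ℤ) : ∫ x in Set.Icc (0 : Fin L → ℝ) 1, F m x =
      if ∀ j, m (j - 1) - m (j + 1) = 0 then ∏ i, fourierCoeffR (f i) (m i) else 0 := by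
    simp only [F, integral_const_mul, integral_prod_exp_two_pi_int, mul_ite, mul_one, mul_zero]
  simp only [expand]
  rw [← integral_tsum_of_summable_integral_norm integrable_F summable_F]
  simp only [integral_F]
  rw [← (Function.const_injective (α := Fin L) (β := ℤ)).tsum_eq]
  · simp
  · intro m hm
    have hm' : ∀ j, m (j - 1) - m (j + 1) = 0 := by
      by_contra h
      exact hm (if_neg h)
    exact ⟨m 0, funext fun j =>
      (Fin.eq_of_forall_sub_one_eq_add_one hodd (fun j => sub_eq_zero.mp (hm' j)) j).symm⟩
end

section
/- Let L ≥ 2 be even and let f_0, …, f_{L−1} : ℝ → ℂ be continuous 1-periodic functions, each with an absolutely convergent Fourier series. Then ∫_{[0,1]^L} ∏_{i=0}^{L−1} f_i(x_{(i+1) mod L} − x_{(i−1) mod L}) dx_0⋯dx_{L−1} = (∑_{ℓ∈ℤ} ∏_{0≤i≤L−1, i even} f̂_i(ℓ)) · (∑_{ℓ∈ℤ} ∏_{0≤i≤L−1, i odd} f̂_i(ℓ)). -/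
open MeasureTheory

section ProductOfSeries

variable {ι : Type*} [Fintype ι]

lemma pi_count_int : Measure.pi (fun _ : ι => (Measure.count : Measure ℤ)) = Measure.count := by
  refine Measure.ext_of_singleton fun k => ?_
  simp

lemma summable_norm_prod_pi {g : ι → ℤ → ℂ} (hg : ∀ i, Summable fun n => ‖g i n‖) :
    Summable fun k : ι → ℤ => ‖∏ i, g i (k i)‖ := by
  have h := Integrable.fintype_prod (f := g) (μ := fun _ => Measure.count)
    fun i => integrable_count_iff.2 (hg i)
  rw [pi_count_int] at h
  exact integrable_count_iff.1 h

lemma prod_tsum_eq_tsum_prod {g : ι → ℤ → ℂ} (hg : ∀ i, Summable fun n => ‖g i n‖) :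
    ∏ i, ∑' n, g i n = ∑' k : ι → ℤ, ∏ i, g i (k i) := by
  have h := integral_fintype_prod_eq_prod (𝕜 := ℂ) g
    (μ := fun _ => (Measure.count : Measure ℤ))
  rw [pi_count_int, integral_countable (integrable_count_iff.2 (summable_norm_prod_pi hg))] at h
  simp_rw [fun i => integral_countable (integrable_count_iff.2 (hg i))] at h
  simpa using h.symm

end ProductOfSeries

lemma setIntegral_exp_int (m : ℤ) :
    ∫ x in Set.Icc (0 : ℝ) 1, Complex.exp (2 * Real.pi * Complex.I * m * x) =
      if m = 0 then 1 else 0 := by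
  rw [integral_Icc_eq_integral_Ioc, ← intervalIntegral.integral_of_le zero_le_one]
  split_ifs with hm
  · simp [hm]
  · rw [integral_exp_mul_complex (by simp [hm, Real.pi_ne_zero])]
    have : Complex.exp (2 * Real.pi * Complex.I * m) = 1 := by
      rw [mul_comm]
      exact Complex.exp_int_mul_two_pi_mul_I m
    simp [this]

lemma setIntegral_pi_exp_int {ι : Type*} [Fintype ι] (m : ι → ℤ) :
    ∫ x in Set.Icc (0 : ι → ℝ) 1, ∏ i, Complex.exp (2 * Real.pi * Complex.I * m i * x i) =
      if ∀ i, m i = 0 then 1 else 0 := by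
  rw [← Set.pi_univ_Icc, volume_pi, Measure.restrict_pi_pi]
  rw [integral_fintype_prod_eq_prod (𝕜 := ℂ)
    fun i (t : ℝ) => Complex.exp (2 * Real.pi * Complex.I * m i * t)]
  simp only [Pi.zero_apply, Pi.one_apply, setIntegral_exp_int]
  simp [Finset.prod_ite_zero]

section Cycle

variable {L : ℕ} [NeZero L]

lemma prod_exp_cyclic (k : Fin L → ℤ) (x : Fin L → ℝ) :
    ∏ i, Complex.exp (2 * Real.pi * Complex.I * k i * ((x (i + 1) - x (i - 1) : ℝ) : ℂ)) =
      ∏ j, Complex.exp (2 * Real.pi * Complex.I * ((k (j - 1) - k (j + 1) : ℤ) : ℂ) * x j) := by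
  rw [← Complex.exp_sum, ← Complex.exp_sum]
  congr 1
  push_cast
  simp only [mul_sub, sub_mul, Finset.sum_sub_distrib]
  congr 1
  · rw [← Equiv.sum_comp (Equiv.addRight (1 : Fin L))
      fun j => 2 * Real.pi * Complex.I * (k (j - 1) : ℂ) * (x j : ℂ)]
    simp
  · rw [← Equiv.sum_comp (Equiv.subRight (1 : Fin L))
      fun j => 2 * Real.pi * Complex.I * (k (j + 1) : ℂ) * (x j : ℂ)]
    simp

/-- The function on the cycle equal to `p.1` at even indices and to `p.2` at odd indices. -/
def alternating (L : ℕ) (p : ℤ × ℤ) (i : Fin L) : ℤ := if Even i.val then p.1 else p.2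

lemma even_val_add_one_iff (heven : Even L) (i : Fin L) :
    Even (i + 1).val ↔ ¬ Even i.val := by
  have hL : 2 ∣ L := heven.two_dvd
  rw [Nat.even_iff, Nat.even_iff, Fin.val_add, Fin.val_one', Nat.add_mod_mod,
    Nat.mod_mod_of_dvd _ hL]
  lia

lemma alternating_injective (heven : Even L) : Function.Injective (alternating L) := by
  intro p q h
  have h1 := (even_val_add_one_iff heven (0 : Fin L)).not
  have hz := congrFun h 0
  have ho := congrFun h (0 + 1)
  simp only [alternating] at hz ho
  rw [if_neg (h1.2 (by simp)), if_neg (h1.2 (by simp))] at ho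
  exact Prod.ext (by simpa using hz) ho

lemma alternating_sub_one (heven : Even L) (p : ℤ × ℤ) (i : Fin L) :
    alternating L p (i - 1) = alternating L p (i + 1) := by
  have h := even_val_add_one_iff heven (i - 1)
  rw [sub_add_cancel] at h
  have h' := even_val_add_one_iff heven i
  simp only [alternating, h', h, not_not]

lemma mem_range_alternating {k : Fin L → ℤ} (hk : ∀ j, k (j - 1) = k (j + 1)) :
    k ∈ Set.range (alternating L) := by
  have hstep : ∀ j, k (j + 1 + 1) = k j := fun j => by simpa using (hk (j + 1)).symm
  have hval : ∀ n (hn : n < L), k ⟨n, hn⟩ = if Even n then k 0 else k (0 + 1) := by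
    intro n
    induction n using Nat.twoStepInduction with
    | zero => intro _; simp
    | one =>
      intro hn
      simp only [Nat.not_even_one, if_false]
      congr 1
      ext
      simp [Nat.mod_eq_of_lt hn]
    | more n ih _ =>
      intro hn
      have e : (⟨n + 2, hn⟩ : Fin L) = ⟨n, by lia⟩ + 1 + 1 := by
        ext
        simp [Fin.val_add, Nat.mod_eq_of_lt hn, Nat.add_assoc]
      rw [e, hstep, ih (by lia)]
      simp [Nat.even_add]
  exact ⟨(k 0, k (0 + 1)), funext fun i => (hval i.val i.isLt).symm⟩

end Cycle

theorem stmt2 (L : ℕ) [NeZero L] (heven : Even L) (f : Fin L → ℝ → ℂ)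
    (hcont : ∀ i, Continuous (f i))
    (hper : ∀ i (x : ℝ), f i (x + 1) = f i x)
    (habs : ∀ i, Summable fun ℓ : ℤ => ‖fourierCoeffR (f i) ℓ‖)
    (hrep : ∀ i (x : ℝ),
      f i x = ∑' ℓ : ℤ, fourierCoeffR (f i) ℓ * Complex.exp (2 * Real.pi * Complex.I * ℓ * x)) :
    (∫ x in Set.Icc (0 : Fin L → ℝ) 1, ∏ i, f i (x (i + 1) - x (i - 1))) =
      (∑' ℓ : ℤ, ∏ i ∈ Finset.univ.filter (fun i : Fin L => Even i.val),
          fourierCoeffR (f i) ℓ) *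
      (∑' ℓ : ℤ, ∏ i ∈ Finset.univ.filter (fun i : Fin L => Odd i.val),
          fourierCoeffR (f i) ℓ) := by
  set c : Fin L → ℤ → ℂ := fun i => fourierCoeffR (f i)
  have hnorm : ∀ (n : ℤ) (t : ℝ), ‖Complex.exp (2 * Real.pi * Complex.I * n * t)‖ = 1 := by
    intro n t
    rw [Complex.norm_exp]
    simp
  have hexp : ∀ x : Fin L → ℝ, ∏ i, f i (x (i + 1) - x (i - 1)) =
      ∑' k : Fin L → ℤ, (∏ i, c i (k i)) *
        ∏ j, Complex.exp (2 * Real.pi * Complex.I * ((k (j - 1) - k (j + 1) : ℤ) : ℂ) * x j) := by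
    intro x
    simp_rw [hrep]
    rw [prod_tsum_eq_tsum_prod (fun i => by simpa only [norm_mul, hnorm, mul_one] using habs i)]
    refine tsum_congr fun k => ?_
    rw [Finset.prod_mul_distrib, prod_exp_cyclic]
  have hsum : Summable fun k : Fin L → ℤ => ‖∏ i, c i (k i)‖ := summable_norm_prod_pi habs
  have hvol : volume (Set.Icc (0 : Fin L → ℝ) 1) = 1 := by simp [Real.volume_Icc_pi]
  have hint : ∀ k : Fin L → ℤ, IntegrableOn (fun x : Fin L → ℝ => (∏ i, c i (k i)) *
      ∏ j, Complex.exp (2 * Real.pi * Complex.I * ((k (j - 1) - k (j + 1) : ℤ) : ℂ) * x j))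
      (Set.Icc 0 1) :=
    fun k => (by fun_prop : Continuous _).continuousOn.integrableOn_compact isCompact_Icc
  simp_rw [hexp]
  rw [← integral_tsum_of_summable_integral_norm hint
    (by simpa only [norm_mul, norm_prod, hnorm, Finset.prod_const_one, mul_one,
      setIntegral_const, measureReal_def, hvol, ENNReal.toReal_one, one_smul] using hsum)]
  simp_rw [integral_const_mul, setIntegral_pi_exp_int, sub_eq_zero]
  rw [← (alternating_injective heven).tsum_eq]
  · simp_rw [alternating_sub_one heven, implies_true, if_true, mul_one]
    have hsplit : ∀ p : ℤ × ℤ, ∏ i, c i (alternating L p i) =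
        (∏ i ∈ Finset.univ.filter (fun i : Fin L => Even i.val), c i p.1) *
          ∏ i ∈ Finset.univ.filter (fun i : Fin L => Odd i.val), c i p.2 := by
      intro p
      rw [← Finset.prod_filter_mul_prod_filter_not Finset.univ fun i : Fin L => Even i.val]
      simp_rw [Nat.not_even_iff_odd]
      congr 1 <;> refine Finset.prod_congr rfl fun i hi => ?_
      · rw [alternating, if_pos (Finset.mem_filter.1 hi).2]
      · rw [alternating, if_neg (Nat.not_even_iff_odd.2 (Finset.mem_filter.1 hi).2)]
    have hpair := hsum.of_norm.comp_injective (alternating_injective heven)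
    simp only [Function.comp_def, hsplit] at hpair
    simp_rw [hsplit]
    rw [hpair.tsum_prod]
    simp_rw [tsum_mul_left, tsum_mul_right, c]
  · intro k hk
    refine mem_range_alternating ?_
    by_contra hne
    simp [hne] at hk
end

section
/- Let L ≥ 1 be odd and let f_{i,j} : ℝ → ℂ (for 0 ≤ i, j ≤ L−1) be continuous 1-periodic functions, each with an absolutely convergent Fourier series. For integration variables x^a_{i,j}, x^b_{i,j} with indices modulo L, set ξ_{i,j}(x^a,x^b) = x^a_{i,j} + x^a_{i+1,j} + x^b_{i+1,j} + x^b_{i+1,j+1} − x^a_{i+1,j+1} − x^a_{i,j+1} − x^b_{i,j+1} − x^b_{i,j}. Then ∫_{[0,1]^{L²}} ∫_{[0,1]^{L²}} ∏_{i=0}^{L−1} ∏_{j=0}^{L−1} f_{i,j}(ξ_{i,j}(x^a,x^b)) dx^a dx^b = ∑_{ℓ∈ℤ} ∏_{i=0}^{L−1} ∏_{j=0}^{L−1} f̂_{i,j}(ℓ). -/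
open MeasureTheory

/-- A finite product of absolutely convergent series is the absolutely convergent series of
products, indexed by tuples. -/
lemma prod_tsum_of_summable_norm {κ : Type*} {n : ℕ} (f : Fin n → κ → ℂ)
    (hf : ∀ i, Summable fun k => ‖f i k‖) :
    (Summable fun k : Fin n → κ => ‖∏ i, f i (k i)‖) ∧
      ∏ i, ∑' k, f i k = ∑' k : Fin n → κ, ∏ i, f i (k i) := by
  induction n with
  | zero => exact ⟨Summable.of_finite, by simp⟩
  | succ n ih =>
    obtain ⟨hs, heq⟩ := ih (fun i => f i.succ) fun i => hf i.succ
    constructor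
    · rw [← (Fin.consEquiv fun _ => κ).summable_iff]
      simpa [Function.comp_def, Fin.consEquiv, Fin.prod_univ_succ] using (hf 0).mul_norm hs
    · rw [← (Fin.consEquiv fun _ => κ).tsum_eq, Fin.prod_univ_succ, heq,
        tsum_mul_tsum_of_summable_norm (hf 0) hs]
      simp [Fin.consEquiv, Fin.prod_univ_succ]

/-- Termwise integration of a series of uniformly bounded functions with absolutely summable
coefficients. -/
lemma integral_tsum_mul_of_norm_le_one {α κ : Type*} [MeasurableSpace α] [Countable κ]
    {μ : Measure α} [IsFiniteMeasure μ] {c : κ → ℂ} (hc : Summable fun k => ‖c k‖)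
    {g : κ → α → ℂ} (hg : ∀ k, AEStronglyMeasurable (g k) μ) (hg1 : ∀ k x, ‖g k x‖ ≤ 1) :
    ∫ x, ∑' k, c k * g k x ∂μ = ∑' k, c k * ∫ x, g k x ∂μ := by
  have hbound : ∀ k x, ‖c k * g k x‖ ≤ ‖c k‖ := fun k x => by
    rw [norm_mul]
    exact mul_le_of_le_one_right (norm_nonneg _) (hg1 k x)
  have h := hasSum_integral_of_dominated_convergence (μ := μ) (F := fun k x => c k * g k x)
    (f := fun x => ∑' k, c k * g k x) (fun k _ => ‖c k‖)
    (fun k => (hg k).const_mul _) (fun k => .of_forall (hbound k))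
    (.of_forall fun _ => hc) (integrable_const _)
    (.of_forall fun x => (Summable.of_norm_bounded hc fun k => hbound k x).hasSum)
  rw [← h.tsum_eq]
  simp_rw [integral_const_mul]

lemma norm_exp_two_pi_I_mul_int_mul (ℓ : ℤ) (x : ℝ) :
    ‖Complex.exp (2 * Real.pi * Complex.I * ℓ * x)‖ = 1 := by
  have h : (2 * Real.pi * Complex.I * ℓ * x : ℂ) = (2 * Real.pi * ℓ * x : ℝ) * Complex.I := by
    push_cast
    ring
  rw [h, Complex.norm_exp_ofReal_mul_I]

lemma integral_Icc_exp_two_pi_I_mul_int_mul (ℓ : ℤ) :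
    ∫ x in Set.Icc (0 : ℝ) 1, Complex.exp (2 * Real.pi * Complex.I * ℓ * x) =
      if ℓ = 0 then 1 else 0 := by
  rw [MeasureTheory.integral_Icc_eq_integral_Ioc, ← intervalIntegral.integral_of_le zero_le_one]
  split_ifs with h
  · simp [h]
  · have hc : (2 * Real.pi * Complex.I * ℓ : ℂ) ≠ 0 := by simp [h, Real.pi_ne_zero]
    rw [integral_exp_mul_complex hc]
    have : Complex.exp (2 * Real.pi * Complex.I * ℓ) = 1 :=
      Complex.exp_eq_one_iff.2 ⟨ℓ, by ring⟩
    simp [this]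

lemma setIntegral_Icc_pi_prod {ι : Type*} [Fintype ι] {E : ι → Type*}
    [∀ i, MeasureSpace (E i)] [∀ i, SigmaFinite (volume : Measure (E i))] [∀ i, Preorder (E i)]
    (a b : ∀ i, E i) (g : ∀ i, E i → ℂ) :
    ∫ x in Set.Icc a b, ∏ i, g i (x i) = ∏ i, ∫ t in Set.Icc (a i) (b i), g i t := by
  rw [← Set.pi_univ_Icc, volume_pi, Measure.restrict_pi_pi, integral_fintype_prod_eq_prod]

lemma integral_Icc_prod_exp {L : ℕ} (A : Fin L → Fin L → ℤ) :
    ∫ x in Set.Icc (0 : Fin L → Fin L → ℝ) 1,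
      ∏ i, ∏ j, Complex.exp (2 * Real.pi * Complex.I * A i j * x i j) =
      if A = 0 then 1 else 0 := by
  rw [setIntegral_Icc_pi_prod (0 : Fin L → Fin L → ℝ) 1
    (fun i (y : Fin L → ℝ) => ∏ j, Complex.exp (2 * Real.pi * Complex.I * A i j * y j))]
  simp_rw [fun i => setIntegral_Icc_pi_prod ((0 : Fin L → Fin L → ℝ) i) ((1 : Fin L → Fin L → ℝ) i)
    (fun j (t : ℝ) => Complex.exp (2 * Real.pi * Complex.I * A i j * t)), Pi.zero_apply,
    Pi.one_apply, integral_Icc_exp_two_pi_I_mul_int_mul]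
  simp [funext_iff, Finset.prod_ite_zero]

lemma Fin.eq_apply_zero_of_add_one {α : Type*} {L : ℕ} [NeZero L] {g : Fin L → α}
    (h : ∀ i, g (i + 1) = g i) (i : Fin L) : g i = g 0 := by
  obtain ⟨n, rfl⟩ := Nat.exists_eq_succ_of_ne_zero (NeZero.ne L)
  induction i using Fin.induction with
  | zero => rfl
  | succ i ih => rw [← Fin.coeSucc_eq_succ, h, ih]

/-- On a cycle of odd length, invariance under a shift by two implies invariance under a shift
by one. -/
lemma Fin.apply_add_one_of_odd {α : Type*} {L : ℕ} [NeZero L] (hodd : Odd L) {g : Fin L → α}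
    (h : ∀ i, g (i + 1 + 1) = g i) (i : Fin L) : g (i + 1) = g i := by
  have hm : ∀ m : ℕ, g (i + m • (1 + 1)) = g i := fun m => by
    induction m with
    | zero => simp
    | succ m ih => rw [succ_nsmul, ← add_assoc, ← add_assoc, h, ih]
  obtain ⟨k, hk⟩ := hodd
  have h1 : (k + 1) • ((1 : Fin L) + 1) = 1 := by
    have h0 : L • (1 : Fin L) = 0 := by simpa using card_nsmul_eq_zero (x := (1 : Fin L))
    rw [← two_nsmul, ← mul_nsmul', show (k + 1) * 2 = L + 1 by omega, succ_nsmul, h0, zero_add]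
  rw [← hm (k + 1), h1]

/-- The coefficient of `xa i j` in `∑ i j, l i j * ξ i j`. -/
def coeffA {L : ℕ} [NeZero L] (l : Fin L → Fin L → ℤ) (i j : Fin L) : ℤ :=
  l i j + l (i - 1) j - l (i - 1) (j - 1) - l i (j - 1)

/-- The coefficient of `xb i j` in `∑ i j, l i j * ξ i j`. -/
def coeffB {L : ℕ} [NeZero L] (l : Fin L → Fin L → ℤ) (i j : Fin L) : ℤ :=
  l (i - 1) j + l (i - 1) (j - 1) - l i (j - 1) - l i j

lemma coeffA_eq_zero_and_coeffB_eq_zero_iff {L : ℕ} [NeZero L] (hodd : Odd L)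
    (l : Fin L → Fin L → ℤ) :
    (coeffA l = 0 ∧ coeffB l = 0) ↔ l ∈ Set.range fun (ℓ : ℤ) (_ _ : Fin L) => ℓ := by
  constructor
  · rintro ⟨hA, hB⟩
    have hA' : ∀ i j, l (i + 1) (j + 1) + l i (j + 1) - l i j - l (i + 1) j = 0 := fun i j => by
      simpa [coeffA] using congrFun₂ hA (i + 1) (j + 1)
    have hB' : ∀ i j, l i (j + 1) + l i j - l (i + 1) j - l (i + 1) (j + 1) = 0 := fun i j => by
      simpa [coeffB] using congrFun₂ hB (i + 1) (j + 1)
    have hdiag : ∀ i j, l (i + 1) (j + 1) = l i j := fun i j => by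
      have := hA' i j
      have := hB' i j
      omega
    have hanti : ∀ i j, l i (j + 1) = l (i + 1) j := fun i j => by
      have := hA' i j
      have := hB' i j
      omega
    have hrow : ∀ i j, l (i + 1) j = l i j := fun i j =>
      Fin.apply_add_one_of_odd hodd (g := fun i => l i j)
        (fun i => by rw [← hanti, hdiag]) i
    refine ⟨l 0 0, ?_⟩
    ext i j
    rw [Fin.eq_apply_zero_of_add_one (g := fun i => l i j) (fun i => hrow i j) i,
      Fin.eq_apply_zero_of_add_one (g := fun j => l 0 j) (fun j => by rw [hanti, hrow]) j]
  · rintro ⟨ℓ, rfl⟩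
    constructor <;> ext i j <;> simp [coeffA, coeffB]

lemma sum_sum_add_one_left {L : ℕ} [NeZero L] (g : Fin L → Fin L → ℂ) :
    ∑ i, ∑ j, g (i + 1) j = ∑ i, ∑ j, g i j :=
  Equiv.sum_comp (Equiv.addRight (1 : Fin L)) fun i => ∑ j, g i j

lemma sum_sum_add_one_right {L : ℕ} [NeZero L] (g : Fin L → Fin L → ℂ) :
    ∑ i, ∑ j, g i (j + 1) = ∑ i, ∑ j, g i j :=
  Finset.sum_congr rfl fun i _ => Equiv.sum_comp (Equiv.addRight (1 : Fin L)) (g i)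

lemma sum_sum_mul_loop {L : ℕ} [NeZero L] (l : Fin L → Fin L → ℤ) (xa xb : Fin L → Fin L → ℂ) :
    ∑ i, ∑ j, (l i j : ℂ) * (xa i j + xa (i + 1) j + xb (i + 1) j + xb (i + 1) (j + 1)
      - xa (i + 1) (j + 1) - xa i (j + 1) - xb i (j + 1) - xb i j) =
    (∑ i, ∑ j, (coeffA l i j : ℂ) * xa i j) + ∑ i, ∑ j, (coeffB l i j : ℂ) * xb i j := by
  have hl (x : Fin L → Fin L → ℂ) :
      ∑ i, ∑ j, (l i j : ℂ) * x (i + 1) j = ∑ i, ∑ j, (l (i - 1) j : ℂ) * x i j := by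
    rw [← sum_sum_add_one_left fun i j => (l (i - 1) j : ℂ) * x i j]
    simp only [add_sub_cancel_right]
  have hr (x : Fin L → Fin L → ℂ) :
      ∑ i, ∑ j, (l i j : ℂ) * x i (j + 1) = ∑ i, ∑ j, (l i (j - 1) : ℂ) * x i j := by
    rw [← sum_sum_add_one_right fun i j => (l i (j - 1) : ℂ) * x i j]
    simp only [add_sub_cancel_right]
  have hlr (x : Fin L → Fin L → ℂ) :
      ∑ i, ∑ j, (l i j : ℂ) * x (i + 1) (j + 1) =
        ∑ i, ∑ j, (l (i - 1) (j - 1) : ℂ) * x i j := by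
    rw [← sum_sum_add_one_left fun i j => (l (i - 1) (j - 1) : ℂ) * x i j,
      ← sum_sum_add_one_right fun i j => (l (i + 1 - 1) (j - 1) : ℂ) * x (i + 1) j]
    simp only [add_sub_cancel_right]
  simp only [coeffA, coeffB, Int.cast_add, Int.cast_sub, mul_add, mul_sub, add_mul, sub_mul,
    Finset.sum_add_distrib, Finset.sum_sub_distrib, hlr]
  simp only [hl, hr]
  ring

lemma prod_exp_loop {L : ℕ} [NeZero L] (l : Fin L → Fin L → ℤ) (xa xb : Fin L → Fin L → ℝ) :
    ∏ i, ∏ j, Complex.exp (2 * Real.pi * Complex.I * l i j *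
      ((xa i j + xa (i + 1) j + xb (i + 1) j + xb (i + 1) (j + 1)
        - xa (i + 1) (j + 1) - xa i (j + 1) - xb i (j + 1) - xb i j : ℝ) : ℂ)) =
    (∏ i, ∏ j, Complex.exp (2 * Real.pi * Complex.I * coeffA l i j * xa i j)) *
      ∏ i, ∏ j, Complex.exp (2 * Real.pi * Complex.I * coeffB l i j * xb i j) := by
  simp_rw [← Complex.exp_sum, ← Complex.exp_add, mul_assoc _ (Int.cast _ : ℂ), ← Finset.mul_sum,
    ← mul_add]
  rw [← sum_sum_mul_loop l (fun i j => xa i j) fun i j => xb i j]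
  push_cast
  rfl

theorem stmt4 (L : ℕ) [NeZero L] (hodd : Odd L) (f : Fin L → Fin L → ℝ → ℂ)
    (hcont : ∀ i j, Continuous (f i j))
    (hper : ∀ i j (x : ℝ), f i j (x + 1) = f i j x)
    (habs : ∀ i j, Summable fun ℓ : ℤ => ‖fourierCoeffR (f i j) ℓ‖)
    (hrep : ∀ i j (x : ℝ),
      f i j x = ∑' ℓ : ℤ, fourierCoeffR (f i j) ℓ *
        Complex.exp (2 * Real.pi * Complex.I * ℓ * x)) :
    (∫ xa in Set.Icc (0 : Fin L → Fin L → ℝ) 1,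
      ∫ xb in Set.Icc (0 : Fin L → Fin L → ℝ) 1,
        ∏ i, ∏ j, f i j
          (xa i j + xa (i + 1) j + xb (i + 1) j + xb (i + 1) (j + 1)
            - xa (i + 1) (j + 1) - xa i (j + 1) - xb i (j + 1) - xb i j)) =
      ∑' ℓ : ℤ, ∏ i, ∏ j, fourierCoeffR (f i j) ℓ := by
  let c (l : Fin L → Fin L → ℤ) : ℂ := ∏ i, ∏ j, fourierCoeffR (f i j) (l i j)
  have hcs : Summable fun l => ‖c l‖ :=
    (prod_tsum_of_summable_norm (fun i (m : Fin L → ℤ) => ∏ j, fourierCoeffR (f i j) (m j))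
      fun i => (prod_tsum_of_summable_norm _ (habs i)).1).1
  let e (A : Fin L → Fin L → ℤ) (x : Fin L → Fin L → ℝ) : ℂ :=
    ∏ i, ∏ j, Complex.exp (2 * Real.pi * Complex.I * A i j * x i j)
  have he1 (A x) : ‖e A x‖ = 1 := by
    simp [e, norm_prod, norm_exp_two_pi_I_mul_int_mul]
  have hem (A) (μ : Measure (Fin L → Fin L → ℝ)) : AEStronglyMeasurable (e A) μ :=
    Continuous.aestronglyMeasurable (by fun_prop)
  have hint (A) : ∫ x in Set.Icc (0 : Fin L → Fin L → ℝ) 1, e A x = if A = 0 then 1 else 0 :=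
    integral_Icc_prod_exp A
  have hfin : IsFiniteMeasure (volume.restrict (Set.Icc (0 : Fin L → Fin L → ℝ) 1)) :=
    ⟨by simpa using isCompact_Icc.measure_lt_top⟩
  have hexpand (t : Fin L → Fin L → ℝ) : ∏ i, ∏ j, f i j (t i j) = ∑' l, c l * e l t := by
    have hs (i j) : Summable fun ℓ : ℤ => ‖fourierCoeffR (f i j) ℓ *
        Complex.exp (2 * Real.pi * Complex.I * ℓ * t i j)‖ := by
      simpa only [norm_mul, norm_exp_two_pi_I_mul_int_mul, mul_one] using habs i j
    have hrow (i) := prod_tsum_of_summable_norm _ (hs i)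
    simp_rw [hrep, fun i => (hrow i).2]
    rw [(prod_tsum_of_summable_norm _ fun i => (hrow i).1).2]
    simp_rw [Finset.prod_mul_distrib]
    rfl
  have hloop (xa xb : Fin L → Fin L → ℝ) :
      ∏ i, ∏ j, f i j
          (xa i j + xa (i + 1) j + xb (i + 1) j + xb (i + 1) (j + 1)
            - xa (i + 1) (j + 1) - xa i (j + 1) - xb i (j + 1) - xb i j) =
        ∑' l, c l * e (coeffA l) xa * e (coeffB l) xb := by
    rw [hexpand fun i j => xa i j + xa (i + 1) j + xb (i + 1) j + xb (i + 1) (j + 1)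
      - xa (i + 1) (j + 1) - xa i (j + 1) - xb i (j + 1) - xb i j]
    exact tsum_congr fun l => by rw [mul_assoc, ← prod_exp_loop]
  have hinner (xa : Fin L → Fin L → ℝ) :
      ∫ xb in Set.Icc (0 : Fin L → Fin L → ℝ) 1, ∑' l, c l * e (coeffA l) xa * e (coeffB l) xb =
        ∑' l, (c l * if coeffB l = 0 then 1 else 0) * e (coeffA l) xa := by
    rw [integral_tsum_mul_of_norm_le_one (by simpa only [norm_mul, he1, mul_one] using hcs)
      (fun l => hem _ _) fun l x => (he1 _ x).le]
    exact tsum_congr fun l => by rw [hint, mul_right_comm]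
  simp_rw [hloop, hinner]
  rw [integral_tsum_mul_of_norm_le_one (hcs.of_nonneg_of_le (fun _ => norm_nonneg _)
    fun l => by split_ifs <;> simp) (fun l => hem _ _) fun l x => (he1 _ x).le]
  have hconst : Function.Injective fun (ℓ : ℤ) (_ _ : Fin L) => ℓ :=
    fun a b h => congrFun₂ h 0 0
  rw [← hconst.tsum_eq]
  · refine tsum_congr fun ℓ => ?_
    obtain ⟨hA, hB⟩ := (coeffA_eq_zero_and_coeffB_eq_zero_iff hodd _).2 ⟨ℓ, rfl⟩
    rw [hint, if_pos hA, if_pos hB, mul_one, mul_one]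
  · intro l hl
    rw [← coeffA_eq_zero_and_coeffB_eq_zero_iff hodd]
    by_contra hne
    refine hl ?_
    rw [not_and_or] at hne
    rcases hne with h | h <;> simp [hint, h]
end

section
/- Let L ≥ 1 and let f_0, …, f_{L−1} : ℝ → ℂ be 1-periodic functions that are integrable on [0,1]. Define g : ℝ^L → ℂ by g(y) = ∫_{[0,1]^L} ∏_{j=0}^{L−1} f_j(x_j − x_{(j+1) mod L} + y_j) dx. Then for every y ∈ ℝ^L, g(y) = g(∑_{j=0}^{L−1} y_j, 0, …, 0); that is, g(y) depends only on the sum of the components of y. -/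
open MeasureTheory

/-- The integral over the unit cube of a function invariant under integer translations is
invariant under arbitrary translations. -/
theorem setIntegral_unitCube_add_of_periodic {ι E : Type*} [Fintype ι] [NormedAddCommGroup E]
    [NormedSpace ℝ E] (F : (ι → ℝ) → E)
    (hF : ∀ (m : ι → ℤ) (x : ι → ℝ), F ((fun i => (m i : ℝ)) + x) = F x) (t : ι → ℝ) :
    ∫ x in Set.Icc (0 : ι → ℝ) 1, F (t + x) = ∫ x in Set.Icc (0 : ι → ℝ) 1, F x := by
  have hD := ZSpan.isAddFundamentalDomain (Pi.basisFun ℝ ι) volume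
  have : VAddInvariantMeasure (Submodule.span ℤ (Set.range (Pi.basisFun ℝ ι))) (ι → ℝ) volume :=
    inferInstanceAs <| VAddInvariantMeasure
      (Submodule.span ℤ (Set.range (Pi.basisFun ℝ ι))).toAddSubgroup (ι → ℝ) volume
  have hDt := hD.vadd_of_comm t
  have hinv : ∀ (v : Submodule.span ℤ (Set.range (Pi.basisFun ℝ ι))) (x : ι → ℝ),
      F (v +ᵥ x) = F x := by
    rintro ⟨v, hv⟩ x
    rw [Module.Basis.mem_span_iff_repr_mem] at hv
    choose m hm using hv
    have hvm : v = fun i => (m i : ℝ) := by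
      funext i
      simpa using (hm i).symm
    rw [← hF m x, ← hvm]
    rfl
  have hIcc : Set.Icc (0 : ι → ℝ) 1 =ᵐ[volume] ZSpan.fundamentalDomain (Pi.basisFun ℝ ι) := by
    rw [ZSpan.fundamentalDomain_pi_basisFun]
    exact (Measure.univ_pi_Ico_ae_eq_Icc (f := fun _ : ι => (0 : ℝ)) (g := fun _ => 1)).symm
  rw [setIntegral_congr_set hIcc, setIntegral_congr_set hIcc, hD.setIntegral_eq hDt hinv,
    ← (measurePreserving_add_left volume t).setIntegral_image_emb
      (measurableEmbedding_addLeft t)]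
  rfl

/-- A family on `Fin L` with zero sum is a cyclic difference. -/
theorem exists_cyclic_sub_eq_of_sum_eq_zero {A : Type*} [AddCommGroup A] {L : ℕ} [NeZero L]
    (z : Fin L → A) (hz : ∑ j, z j = 0) : ∃ t : Fin L → A, ∀ j, t (j + 1) - t j = z j := by
  obtain ⟨n, rfl⟩ := Nat.exists_eq_succ_of_ne_zero (NeZero.ne L)
  refine ⟨fun j => ∑ i ∈ Finset.range j, z (Fin.ofNat (n + 1) i), fun j => ?_⟩
  induction j using Fin.lastCases with
  | last =>
    rw [Fin.sum_univ_castSucc] at hz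
    have h : ∑ i ∈ Finset.range n, z (Fin.ofNat (n + 1) i) = ∑ i : Fin n, z i.castSucc := by
      rw [Finset.sum_range]
      refine Finset.sum_congr rfl fun i _ => congrArg z (Fin.ext ?_)
      simp
    have h0 : Fin.last n + 1 = 0 := by simp
    simp only [h0, Fin.val_zero, Finset.range_zero, Finset.sum_empty, Fin.val_last, h, zero_sub]
    exact neg_eq_of_add_eq_zero_right hz
  | cast j =>
    simp only [Fin.coeSucc_eq_succ, Fin.val_succ, Finset.sum_range_succ, Fin.val_castSucc,
      add_sub_cancel_left]
    refine congrArg z (Fin.ext ?_)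
    simp

theorem stmt7 (L : ℕ) [NeZero L] (f : Fin L → ℝ → ℂ)
    (hper : ∀ j (x : ℝ), f j (x + 1) = f j x)
    (hint : ∀ j, IntegrableOn (f j) (Set.Icc (0 : ℝ) 1))
    (g : (Fin L → ℝ) → ℂ)
    (hg : ∀ y : Fin L → ℝ,
      g y = ∫ x in Set.Icc (0 : Fin L → ℝ) 1, ∏ j, f j (x j - x (j + 1) + y j)) :
    ∀ y : Fin L → ℝ,
      g y = g (fun j => if j = 0 then ∑ j', y j' else 0) := by
  intro y
  obtain ⟨t, ht⟩ := exists_cyclic_sub_eq_of_sum_eq_zero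
    (fun j => y j - if j = 0 then ∑ j', y j' else 0) (by simp)
  rw [hg, hg, ← setIntegral_unitCube_add_of_periodic _ _ t]
  · congr 1
    funext x
    refine Finset.prod_congr rfl fun j _ => congrArg (f j) ?_
    simp only [Pi.add_apply]
    linear_combination -ht j
  · intro m x
    refine Finset.prod_congr rfl fun j _ => ?_
    have hj : Function.Periodic (f j) 1 := hper j
    rw [← hj.int_mul (m j - m (j + 1)) (x j - x (j + 1) + y j)]
    congr 1
    simp only [Pi.add_apply]
    push_cast
    ring
end

section
/- Let L ≥ 1 and let f_{i,j} : ℝ → ℂ (for 0 ≤ i, j ≤ L−1) be 1-periodic functions, integrable on [0,1] and bounded. Define g_i : ℝ → ℂ by g_i(t) = ∫_{[0,1]^L} f_{i,0}(x_0 − x_1 + t) ∏_{j=1}^{L−1} f_{i,j}(x_j − x_{(j+1) mod L}) dx. Then ∫_{[0,1]^{2L²}} ∏_{i=0}^{L−1} ∏_{j=0}^{L−1} f_{i,j}(x^a_{i,j} − x^a_{i,(j+1) mod L} − x^b_{i,j} + x^b_{(i+1) mod L,j}) dx^a dx^b = ∫_{[0,1]^L} ∏_{i=0}^{L−1} g_i(u_{(i+1)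 mod L} − u_i) du_0⋯du_{L−1}. -/
open MeasureTheory

/-- The projection from the unit interval to the circle preserves the measure. -/
lemma measurePreserving_mk_Icc :
    MeasurePreserving ((↑) : ℝ → UnitAddCircle) (volume.restrict (Set.Icc 0 1)) volume := by
  have h := UnitAddCircle.measurePreserving_mk 0
  rwa [zero_add, Measure.restrict_congr_set Ioc_ae_eq_Icc] at h

lemma measurePreserving_pi_Icc {ι X Y : Type*} [Fintype ι] [MeasureSpace X] [MeasureSpace Y]
    [Preorder X] [Zero X] [One X] [SigmaFinite (volume : Measure X)]
    [SigmaFinite (volume : Measure Y)] {q : X → Y}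
    (hq : MeasurePreserving q (volume.restrict (Set.Icc 0 1)) volume) :
    MeasurePreserving (fun (x : ι → X) i => q (x i))
      (volume.restrict (Set.Icc 0 1)) volume := by
  have h := measurePreserving_pi (fun _ : ι => (volume : Measure X).restrict (Set.Icc 0 1))
    (fun _ => (volume : Measure Y)) (fun _ => hq)
  rw [← Measure.restrict_pi_pi, Set.pi_univ_Icc] at h
  exact h

lemma aestronglyMeasurable_lift {f : ℝ → ℂ} (hf : Function.Periodic f 1)
    (hm : AEStronglyMeasurable f (volume.restrict (Set.Icc 0 1))) :
    AEStronglyMeasurable (hf.lift : UnitAddCircle → ℂ) volume := by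
  have hm' : AEStronglyMeasurable f (volume.restrict (Set.Ioc 0 (0 + 1))) := by
    rwa [zero_add, Measure.restrict_congr_set Ioc_ae_eq_Icc]
  let s : UnitAddCircle → ℝ := fun x => (AddCircle.measurableEquivIoc 1 0 x : ℝ)
  have hs : Measurable s :=
    measurable_subtype_coe.comp (AddCircle.measurableEquivIoc 1 0).measurable
  have hmp : MeasurePreserving s volume (volume.restrict (Set.Ioc 0 (0 + 1))) := by
    refine ⟨hs, ?_⟩
    have h := AddCircle.measurePreserving_mk 1 0
    rw [← h.map_eq, Measure.map_map hs h.measurable]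
    conv_rhs => rw [← Measure.map_id (μ := volume.restrict (Set.Ioc (0 : ℝ) (0 + 1)))]
    refine Measure.map_congr ?_
    filter_upwards [ae_restrict_mem measurableSet_Ioc] with x hx
    exact AddCircle.equivIoc_coe_of_mem hx
  have h := hm'.comp_measurePreserving hmp
  refine h.congr (Filter.Eventually.of_forall fun x => ?_)
  change f (s x) = hf.lift x
  rw [← hf.lift_coe]
  congr 1
  exact AddCircle.coe_equivIoc

/-- Composition with a nonconstant affine character preserves almost everywhere measurability. -/
lemma aestronglyMeasurable_comp_hom {A : Type*} [AddCommGroup A] [TopologicalSpace A]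
    [IsTopologicalAddGroup A] [CompactSpace A] [MeasureSpace A] [BorelSpace A]
    [(volume : Measure A).IsAddHaarMeasure] [IsProbabilityMeasure (volume : Measure A)]
    {F : UnitAddCircle → ℂ} (hF : AEStronglyMeasurable F volume) (φ : A →+ UnitAddCircle)
    (hφ : Continuous φ) (hs : Function.Surjective φ) (t : UnitAddCircle) :
    AEStronglyMeasurable (fun a => F (φ a + t)) volume :=
  (hF.comp_measurePreserving (measurePreserving_add_right volume t)).comp_measurePreserving
    (φ.measurePreserving hφ hs (by simp))

instance : IsProbabilityMeasure (volume : Measure UnitAddCircle) := ⟨by simp⟩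

instance {ι κ : Type*} [Countable ι] [Countable κ] : BorelSpace (ι → κ → UnitAddCircle) :=
  have : BorelSpace (κ → UnitAddCircle) := inferInstance
  have : SecondCountableTopology (κ → UnitAddCircle) := inferInstance
  Pi.borelSpace

instance {ι κ : Type*} [Fintype ι] [Fintype κ] :
    (volume : Measure (ι → κ → UnitAddCircle)).IsAddHaarMeasure :=
  Measure.pi.isAddHaarMeasure _

instance {ι : Type*} [Fintype ι] :
    (volume : Measure (UnitAddCircle × (ι → UnitAddCircle))).IsAddHaarMeasure :=
  Measure.prod.instIsAddHaarMeasure _ _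

instance {ι κ : Type*} [Fintype ι] [Fintype κ] :
    (volume : Measure ((ι → κ → UnitAddCircle) × (ι → κ → UnitAddCircle))).IsAddHaarMeasure :=
  Measure.prod.instIsAddHaarMeasure _ _

/-- Every labelling of a cycle is cohomologous to one supported on a single edge. -/
lemma exists_cyclic_primitive {A : Type*} [AddCommGroup A] {L : ℕ} [NeZero L] (d : Fin L → A) :
    ∃ s : Fin L → A, ∀ j, s j - s (j + 1) + d j = if j = 0 then ∑ k, d k else 0 := by
  obtain ⟨n, rfl⟩ := Nat.exists_eq_succ_of_ne_zero (NeZero.ne L)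
  let e : ℕ → A := fun k => if h : k < n + 1 then d ⟨k, h⟩ else 0
  have he : ∀ j : Fin (n + 1), e j = d j := fun j => dif_pos j.isLt
  have htot : ∑ k, d k = ∑ k ∈ Finset.range (n + 1), e k := by
    rw [Finset.sum_range]; simp [he]
  refine ⟨fun j => (∑ k ∈ Finset.range j, e k) - if j = 0 then 0 else ∑ k, d k, fun j => ?_⟩
  rcases eq_or_ne j (Fin.last n) with rfl | hj
  · rw [Fin.last_add_one, htot, ← he (Fin.last n)]
    by_cases h0 : Fin.last n = 0
    · have : n = 0 := by simpa [Fin.ext_iff] using h0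
      subst this; simp [h0]
    · simp [h0, Finset.sum_range_succ]
  · have hlt : j < Fin.last n := Fin.lt_last_iff_ne_last.mpr hj
    have hv := Fin.val_add_one_of_lt hlt
    have hne : j + 1 ≠ 0 := by
      intro h; rw [h] at hv; simp at hv
    dsimp only
    rw [hv, Finset.sum_range_succ, he, if_neg hne]
    by_cases h0 : j = 0
    · subst h0; simp
    · simp [h0]

/-- The integral around a cycle of differences, twisted by `t` on the edge at `0`. -/
noncomputable def cyclicKernel {L : ℕ} [NeZero L] (F : Fin L → UnitAddCircle → ℂ)
    (t : UnitAddCircle) : ℂ :=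
  ∫ x : Fin L → UnitAddCircle, ∏ j, F j (x j - x (j + 1) + if j = 0 then t else 0)

lemma integral_cyclic_eq_cyclicKernel {L : ℕ} [NeZero L] (F : Fin L → UnitAddCircle → ℂ)
    (d : Fin L → UnitAddCircle) :
    ∫ x : Fin L → UnitAddCircle, ∏ j, F j (x j - x (j + 1) + d j) =
      cyclicKernel F (∑ j, d j) := by
  obtain ⟨s, hs⟩ := exists_cyclic_primitive d
  rw [cyclicKernel, ← integral_add_right_eq_self _ s]
  refine integral_congr_ae (Filter.Eventually.of_forall fun x => Finset.prod_congr rfl fun j _ => ?_)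
  rw [← hs j]
  simp only [Pi.add_apply]
  congr 1
  abel

/-- The difference of two coordinates of a torus, as a homomorphism. -/
def coordSub {ι : Type*} (i j : ι) : (ι → UnitAddCircle) →+ UnitAddCircle :=
  Pi.evalAddMonoidHom (fun _ => UnitAddCircle) i - Pi.evalAddMonoidHom (fun _ => UnitAddCircle) j

lemma continuous_coordSub {ι : Type*} (i j : ι) : Continuous (coordSub i j) :=
  (continuous_apply i).sub (continuous_apply j)

lemma coordSub_surjective {ι : Type*} [DecidableEq ι] {i j : ι} (h : i ≠ j) :
    Function.Surjective (coordSub i j) := fun y =>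
  ⟨Pi.single i y, by simp [coordSub, h.symm]⟩

lemma aestronglyMeasurable_coordSub {ι : Type*} [Fintype ι] [DecidableEq ι] {i j : ι} (h : i ≠ j)
    {F : UnitAddCircle → ℂ} (hF : AEStronglyMeasurable F volume) (t : UnitAddCircle) :
    AEStronglyMeasurable (fun x : ι → UnitAddCircle => F (x i - x j + t)) volume :=
  aestronglyMeasurable_comp_hom hF (coordSub i j) (continuous_coordSub i j)
    (coordSub_surjective h) t

lemma aestronglyMeasurable_cyclicKernel {L : ℕ} [NeZero L] (hL : ∀ j : Fin L, j ≠ j + 1)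
    {F : Fin L → UnitAddCircle → ℂ} (hF : ∀ j, AEStronglyMeasurable (F j) volume) :
    AEStronglyMeasurable (cyclicKernel F) volume := by
  refine AEStronglyMeasurable.integral_prod_right' (ν := volume)
    (f := fun p : UnitAddCircle × (Fin L → UnitAddCircle) =>
      ∏ j, F j (p.2 j - p.2 (j + 1) + if j = 0 then p.1 else 0)) ?_
  rw [← Measure.volume_eq_prod]
  refine Finset.aestronglyMeasurable_fun_prod _ fun j _ => ?_
  let φ : UnitAddCircle × (Fin L → UnitAddCircle) →+ UnitAddCircle :=
    (coordSub j (j + 1)).comp (AddMonoidHom.snd _ _) +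
      if j = 0 then AddMonoidHom.fst _ _ else 0
  have hval : ∀ p, φ p = p.2 j - p.2 (j + 1) + if j = 0 then p.1 else 0 := by
    intro p
    by_cases h : j = 0 <;> simp [φ, coordSub, h]
  have hc : Continuous φ := by
    rw [show ⇑φ = _ from funext hval]
    split_ifs <;> fun_prop
  have hs : Function.Surjective φ := fun y => by
    obtain ⟨x, hx⟩ := coordSub_surjective (hL j) y
    exact ⟨(0, x), by simp [φ, hx]; split_ifs <;> simp⟩
  have h := aestronglyMeasurable_comp_hom (hF j) φ hc hs 0
  simpa only [hval, add_zero] using h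

/-- The integrand of the two-dimensional lattice gauge model on the torus. -/
def gaugeIntegrand {L : ℕ} [NeZero L] (F : Fin L → Fin L → UnitAddCircle → ℂ)
    (x : (Fin L → Fin L → UnitAddCircle) × (Fin L → Fin L → UnitAddCircle)) : ℂ :=
  ∏ i, ∏ j, F i j (x.1 i j - x.1 i (j + 1) - x.2 i j + x.2 (i + 1) j)

lemma aestronglyMeasurable_gaugeIntegrand {L : ℕ} [NeZero L] (hL : ∀ j : Fin L, j ≠ j + 1)
    {F : Fin L → Fin L → UnitAddCircle → ℂ} (hF : ∀ i j, AEStronglyMeasurable (F i j) volume) :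
    AEStronglyMeasurable (gaugeIntegrand F) volume := by
  refine Finset.aestronglyMeasurable_fun_prod _ fun i _ =>
    Finset.aestronglyMeasurable_fun_prod _ fun j _ => ?_
  let φ : (Fin L → Fin L → UnitAddCircle) × (Fin L → Fin L → UnitAddCircle) →+ UnitAddCircle :=
    { toFun := fun x => x.1 i j - x.1 i (j + 1) - x.2 i j + x.2 (i + 1) j
      map_zero' := by simp
      map_add' := fun x y => by simp only [Prod.fst_add, Prod.snd_add, Pi.add_apply]; abel }
  have hval : ∀ x, φ x = x.1 i j - x.1 i (j + 1) - x.2 i j + x.2 (i + 1) j := fun _ => rfl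
  have hc : Continuous φ := by
    rw [show ⇑φ = _ from funext hval]
    fun_prop
  have hs : Function.Surjective φ := fun y => by
    obtain ⟨x, hx⟩ := coordSub_surjective (hL j) y
    exact ⟨(fun _ => x, 0), by simpa [φ, coordSub] using hx⟩
  have h := aestronglyMeasurable_comp_hom (hF i j) φ hc hs 0
  simpa only [hval, add_zero] using h

lemma aestronglyMeasurable_prod_cyclicKernel {L : ℕ} [NeZero L] (hL : ∀ j : Fin L, j ≠ j + 1)
    {F : Fin L → Fin L → UnitAddCircle → ℂ} (hF : ∀ i j, AEStronglyMeasurable (F i j) volume) :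
    AEStronglyMeasurable (fun u : Fin L → UnitAddCircle =>
      ∏ i, cyclicKernel (F i) (u (i + 1) - u i)) volume := by
  refine Finset.aestronglyMeasurable_fun_prod _ fun i _ => ?_
  simpa only [add_zero] using aestronglyMeasurable_coordSub (hL i).symm
    (aestronglyMeasurable_cyclicKernel hL (hF i)) 0

lemma integral_gaugeIntegrand {L : ℕ} [NeZero L] (hL : ∀ j : Fin L, j ≠ j + 1)
    {F : Fin L → Fin L → UnitAddCircle → ℂ} (hF : ∀ i j, AEStronglyMeasurable (F i j) volume)
    (hb : ∀ i j, ∃ C : ℝ, ∀ x, ‖F i j x‖ ≤ C) :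
    ∫ x, gaugeIntegrand F x =
      ∫ u : Fin L → UnitAddCircle, ∏ i, cyclicKernel (F i) (u (i + 1) - u i) := by
  choose C hC using hb
  have hint : Integrable (gaugeIntegrand F) volume := by
    refine Integrable.of_bound (aestronglyMeasurable_gaugeIntegrand hL hF) (∏ i, ∏ j, C i j)
      (Filter.Eventually.of_forall fun x => ?_)
    simp only [gaugeIntegrand, norm_prod]
    gcongr
    exact hC _ _ _
  rw [Measure.volume_eq_prod] at hint ⊢
  rw [integral_prod_symm _ hint]
  let σ : (Fin L → Fin L → UnitAddCircle) →+ (Fin L → UnitAddCircle) :=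
    { toFun := fun b i => ∑ j, b i j
      map_zero' := by ext; simp
      map_add' := fun a b => by ext; simp [Finset.sum_add_distrib] }
  have hσ : MeasurePreserving σ volume volume := by
    refine σ.measurePreserving ?_ ?_ (by simp)
    · change Continuous fun (b : Fin L → Fin L → UnitAddCircle) i => ∑ j, b i j
      fun_prop
    · exact fun u => ⟨fun i => Pi.single 0 (u i), funext fun i => by simp [σ]⟩
  have hm := aestronglyMeasurable_prod_cyclicKernel hL hF
  rw [← hσ.map_eq] at hm ⊢
  rw [integral_map hσ.aemeasurable hm]
  refine integral_congr_ae (Filter.Eventually.of_forall fun b => ?_)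
  have h := integral_fintype_prod_volume_eq_prod (𝕜 := ℂ)
    (fun i (a : Fin L → UnitAddCircle) => ∏ j, F i j (a j - a (j + 1) + (b (i + 1) j - b i j)))
  simp only [integral_cyclic_eq_cyclicKernel, Finset.sum_sub_distrib] at h
  refine Eq.trans ?_ h
  refine integral_congr_ae (Filter.Eventually.of_forall fun a => ?_)
  refine Finset.prod_congr rfl fun i _ => Finset.prod_congr rfl fun j _ => congrArg _ ?_
  abel

theorem stmt8 (L : ℕ) [NeZero L] (f : Fin L → Fin L → ℝ → ℂ)
    (hper : ∀ i j (x : ℝ), f i j (x + 1) = f i j x)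
    (hint : ∀ i j, IntegrableOn (f i j) (Set.Icc (0 : ℝ) 1))
    (hbd : ∀ i j, ∃ C : ℝ, ∀ x : ℝ, ‖f i j x‖ ≤ C)
    (g : Fin L → ℝ → ℂ)
    (hg : ∀ i (t : ℝ),
      g i t = ∫ x in Set.Icc (0 : Fin L → ℝ) 1,
        f i 0 (x 0 - x 1 + t) * ∏ j ∈ Finset.Ioi (0 : Fin L), f i j (x j - x (j + 1))) :
    (∫ x in Set.Icc (0 : (Fin L → Fin L → ℝ) × (Fin L → Fin L → ℝ)) 1,
      ∏ i, ∏ j, f i j (x.1 i j - x.1 i (j + 1) - x.2 i j + x.2 (i + 1) j)) =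
      ∫ u in Set.Icc (0 : Fin L → ℝ) 1, ∏ i, g i (u (i + 1) - u i) := by
  have hq : MeasurePreserving (fun (x : Fin L → ℝ) i => (x i : UnitAddCircle))
      (volume.restrict (Set.Icc 0 1)) volume := measurePreserving_pi_Icc measurePreserving_mk_Icc
  have hqq : MeasurePreserving (fun (x : Fin L → Fin L → ℝ) i j => (x i j : UnitAddCircle))
      (volume.restrict (Set.Icc 0 1)) volume := measurePreserving_pi_Icc hq
  have hprod := hqq.prod hqq
  rw [Measure.prod_restrict, Set.Icc_prod_Icc, ← Measure.volume_eq_prod,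
    ← Measure.volume_eq_prod] at hprod
  by_cases hL : L = 1
  · subst hL
    have h1 := hq.measure_preimage (s := Set.univ) MeasurableSet.univ.nullMeasurableSet
    have h2 := hprod.measure_preimage (s := Set.univ) MeasurableSet.univ.nullMeasurableSet
    simp only [Set.preimage_univ, measure_univ] at h1 h2
    have hgf : ∀ i t, g i t = f i 0 t := by
      intro i t
      rw [hg]
      simp [-Measure.restrict_apply, h1, Subsingleton.elim (1 : Fin 1) 0, Measure.real]
    have hgauge : ∀ x : (Fin 1 → Fin 1 → ℝ) × (Fin 1 → Fin 1 → ℝ),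
        ∏ i, ∏ j, f i j (x.1 i j - x.1 i (j + 1) - x.2 i j + x.2 (i + 1) j) = f 0 0 0 := by
      intro x
      simp [Subsingleton.elim (1 : Fin 1) 0]
    have hkernel : ∀ u : Fin 1 → ℝ, ∏ i, g i (u (i + 1) - u i) = f 0 0 0 := by
      intro u
      simp [hgf, Subsingleton.elim (1 : Fin 1) 0]
    simp only [hgauge, hkernel, integral_const, Measure.real, h1]
    erw [h2]
  have hne : ∀ j : Fin L, j ≠ j + 1 := by
    intro j h
    have : (1 : Fin L) = 0 := by simpa using h.symm
    have := congrArg Fin.val this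
    have hL0 := NeZero.ne L
    simp [Nat.mod_eq_of_lt (show 1 < L by omega)] at this
  let F : Fin L → Fin L → UnitAddCircle → ℂ := fun i j =>
    Function.Periodic.lift (f := f i j) (c := 1) (hper i j)
  have hFf : ∀ i j (x : ℝ), F i j (x : UnitAddCircle) = f i j x := fun i j x =>
    Function.Periodic.lift_coe (hper i j) x
  have hF : ∀ i j, AEStronglyMeasurable (F i j) volume := fun i j =>
    aestronglyMeasurable_lift (hper i j) (hint i j).aestronglyMeasurable
  have hb : ∀ i j, ∃ C : ℝ, ∀ x, ‖F i j x‖ ≤ C := fun i j => by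
    obtain ⟨C, hC⟩ := hbd i j
    refine ⟨C, fun x => ?_⟩
    induction x using QuotientAddGroup.induction_on with
    | H x => exact (congrArg norm (hFf i j x)).trans_le (hC x)
  have hgk : ∀ i (t : ℝ), g i t = cyclicKernel (F i) (t : UnitAddCircle) := by
    intro i t
    have hm : AEStronglyMeasurable (fun x : Fin L → UnitAddCircle =>
        ∏ j, F i j (x j - x (j + 1) + if j = 0 then (t : UnitAddCircle) else 0)) volume :=
      Finset.aestronglyMeasurable_fun_prod _ fun j _ =>
        aestronglyMeasurable_coordSub (hne j) (hF i j) _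
    rw [hg, cyclicKernel]
    rw [← hq.map_eq] at hm ⊢
    rw [integral_map hq.aemeasurable hm]
    refine integral_congr_ae (Filter.Eventually.of_forall fun x => ?_)
    have hset : (Finset.univ : Finset (Fin L)).erase 0 = Finset.Ioi 0 := by
      ext j; simp [Fin.pos_iff_ne_zero]
    dsimp only
    rw [← Finset.mul_prod_erase _ _ (Finset.mem_univ (0 : Fin L)), hset]
    congr 1
    · simp [← hFf]
    · refine Finset.prod_congr rfl fun j hj => ?_
      have hj0 : j ≠ 0 := (Finset.mem_Ioi.mp hj).ne'
      simp [← hFf, hj0]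
  have hmg := aestronglyMeasurable_gaugeIntegrand hne hF
  have hmk := aestronglyMeasurable_prod_cyclicKernel hne hF
  have key := integral_gaugeIntegrand hne hF hb
  rw [← hprod.map_eq] at hmg key
  rw [← hq.map_eq] at hmk key
  rw [integral_map hprod.aemeasurable hmg, integral_map hq.aemeasurable hmk] at key
  simp only [hgk, AddCircle.coe_sub]
  refine Eq.trans ?_ key
  refine integral_congr_ae (Filter.Eventually.of_forall fun x => ?_)
  simp [gaugeIntegrand, ← hFf]
end

section
/- Let L ≥ 1 and let f_{i,j} : ℝ → ℂ (for 0 ≤ i, j ≤ L−1) be 1-periodic functions, integrable on [0,1] and bounded. Define g_i : ℝ^L → ℂ by g_i(y) = ∫_{[0,1]^L} ∏_{j=0}^{L−1} f_{i,j}(x_j − x_{(j+1) mod L} + y_j) dx. Then the 2L²-dimensional integral factorizes as ∫_{[0,1]^{2L²}} ∏_{i=0}^{L−1} ∏_{j=0}^{L−1} f_{i,j}(x^a_{i,j} − x^a_{i,(j+1) mod L} − x^b_{i,j} + x^b_{(i+1) mod L,j}) dx^a dx^b = ∫_{[0,1]^{L²}} ∏_{i=0}^{L−1} g_i(x^b_{(i+1)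 mod L} − x^b_i) dx^b, where x^b_i = (x^b_{i,0}, …, x^b_{i,L−1}) ∈ [0,1]^L denotes the i-th row of the x^b variables. -/
open MeasureTheory

/-- A periodic function that is almost everywhere strongly measurable on one period is so on `ℝ`. -/
lemma Function.Periodic.aestronglyMeasurable_of_restrict_Icc {E : Type*} [TopologicalSpace E]
    [TopologicalSpace.PseudoMetrizableSpace E] {f : ℝ → E} (hf : Function.Periodic f 1)
    (hm : AEStronglyMeasurable f (volume.restrict (Set.Icc 0 1))) :
    AEStronglyMeasurable f volume := by
  rw [← Measure.restrict_univ (μ := (volume : Measure ℝ)), ← iUnion_Icc_intCast ℝ,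
    aestronglyMeasurable_iUnion_iff]
  intro n
  have hshift : MeasurePreserving (fun x : ℝ => x - n)
      (volume.restrict (Set.Icc (n : ℝ) (n + 1))) (volume.restrict (Set.Icc 0 1)) := by
    have hpre : (fun x : ℝ => x - n) ⁻¹' Set.Icc 0 1 = Set.Icc (n : ℝ) (n + 1) := by
      simp [add_comm]
    rw [← hpre]
    exact (measurePreserving_sub_right volume (n : ℝ)).restrict_preimage measurableSet_Icc
  refine (hm.comp_measurePreserving hshift).congr (ae_of_all _ fun x => ?_)
  simpa using hf.sub_int_mul_eq n (x := x)

/-- Composing an almost everywhere strongly measurable function on `ℝ` with any linear functional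
(the zero functional included) preserves almost everywhere strong measurability. -/
lemma MeasureTheory.AEStronglyMeasurable.comp_linearFunctional {V E : Type*}
    [NormedAddCommGroup V] [NormedSpace ℝ V] [FiniteDimensional ℝ V] [MeasurableSpace V]
    [BorelSpace V] (μ : Measure V) [μ.IsAddHaarMeasure] [TopologicalSpace E] {f : ℝ → E}
    (hf : AEStronglyMeasurable f volume) (l : V →ₗ[ℝ] ℝ) :
    AEStronglyMeasurable (fun v => f (l v)) μ := by
  by_cases hl : l = 0
  · simpa [hl] using aestronglyMeasurable_const (μ := μ) (b := f 0)
  · obtain ⟨c, -, hc⟩ :=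
      l.exists_map_addHaar_eq_smul_addHaar μ volume (LinearMap.surjective hl)
    refine hf.comp_quasiMeasurePreserving
      ⟨l.continuous_of_finiteDimensional.measurable, ?_⟩
    rw [hc]
    exact Measure.smul_absolutelyContinuous

/-- Over the unit cube, the integral of a product of functions of separate blocks of variables is
the product of the integrals. -/
lemma setIntegral_Icc_prod_eq_prod {ι κ : Type*} [Fintype ι] [Fintype κ]
    (h : ι → (κ → ℝ) → ℂ) :
    ∫ x in Set.Icc (0 : ι → κ → ℝ) 1, ∏ i, h i (x i) =
      ∏ i, ∫ x in Set.Icc (0 : κ → ℝ) 1, h i x := by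
  rw [← integral_fintype_prod_eq_prod, ← Measure.restrict_pi_pi, volume_pi, ← Set.pi_univ_Icc]
  rfl

theorem stmt9 (L : ℕ) [NeZero L] (f : Fin L → Fin L → ℝ → ℂ)
    (hper : ∀ i j (x : ℝ), f i j (x + 1) = f i j x)
    (hint : ∀ i j, IntegrableOn (f i j) (Set.Icc (0 : ℝ) 1))
    (hbd : ∀ i j, ∃ C : ℝ, ∀ x : ℝ, ‖f i j x‖ ≤ C)
    (g : Fin L → (Fin L → ℝ) → ℂ)
    (hg : ∀ i (y : Fin L → ℝ),
      g i y = ∫ x in Set.Icc (0 : Fin L → ℝ) 1, ∏ j, f i j (x j - x (j + 1) + y j)) :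
    (∫ x in Set.Icc (0 : (Fin L → Fin L → ℝ) × (Fin L → Fin L → ℝ)) 1,
      ∏ i, ∏ j, f i j (x.1 i j - x.1 i (j + 1) - x.2 i j + x.2 (i + 1) j)) =
      ∫ xb in Set.Icc (0 : Fin L → Fin L → ℝ) 1,
        ∏ i, g i (xb (i + 1) - xb i) := by
  have : (volume : Measure (Fin L → Fin L → ℝ)).IsAddHaarMeasure :=
    Measure.pi.isAddHaarMeasure _
  have : (volume : Measure ((Fin L → Fin L → ℝ) × (Fin L → Fin L → ℝ))).IsAddHaarMeasure :=
    Measure.prod.instIsAddHaarMeasure volume volume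
  have hmeas : ∀ i j, AEStronglyMeasurable
      (fun x : (Fin L → Fin L → ℝ) × (Fin L → Fin L → ℝ) =>
        f i j (x.1 i j - x.1 i (j + 1) - x.2 i j + x.2 (i + 1) j)) volume := by
    intro i j
    have hf : AEStronglyMeasurable (f i j) volume :=
      Function.Periodic.aestronglyMeasurable_of_restrict_Icc (hper i j)
        (hint i j).aestronglyMeasurable
    let l : ((Fin L → Fin L → ℝ) × (Fin L → Fin L → ℝ)) →ₗ[ℝ] ℝ :=
      { toFun := fun x => x.1 i j - x.1 i (j + 1) - x.2 i j + x.2 (i + 1) j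
        map_add' := fun x y => by
          simp only [Prod.fst_add, Prod.snd_add, Pi.add_apply]
          ring
        map_smul' := fun c x => by
          simp only [Prod.smul_fst, Prod.smul_snd, Pi.smul_apply, smul_eq_mul, RingHom.id_apply]
          ring }
    exact hf.comp_linearFunctional volume l
  choose C hC using hbd
  have hintegrable : IntegrableOn
      (fun x : (Fin L → Fin L → ℝ) × (Fin L → Fin L → ℝ) =>
        ∏ i, ∏ j, f i j (x.1 i j - x.1 i (j + 1) - x.2 i j + x.2 (i + 1) j))
      (Set.Icc 0 1) volume := by
    refine IntegrableOn.of_bound isCompact_Icc.measure_lt_top ?_ (∏ i, ∏ j, C i j)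
      (ae_of_all _ fun x => ?_)
    · exact (Finset.aestronglyMeasurable_fun_prod _ fun i _ =>
        Finset.aestronglyMeasurable_fun_prod _ fun j _ => hmeas i j).restrict
    · simp only [norm_prod]
      gcongr
      exact hC _ _ _
  rw [IntegrableOn, Set.Icc_prod_eq, Measure.volume_eq_prod, ← Measure.prod_restrict]
    at hintegrable
  rw [Set.Icc_prod_eq, Measure.volume_eq_prod, ← Measure.prod_restrict,
    integral_prod_symm _ hintegrable]
  refine integral_congr_ae (ae_of_all _ fun xb => ?_)
  simp only [hg]
  rw [← setIntegral_Icc_prod_eq_prod]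
  simp only [Pi.sub_apply, Prod.fst_zero, Prod.fst_one]
  congr! 5
  ring_nf
end

section
/- Let m ≥ 1, L = 2m, and let f : ℝ → ℂ be a 1-periodic function integrable on [0,1] and bounded. Then ∫_{[0,1]^{2m}} ∏_{i=0}^{2m−1} f(x_{(i+1) mod 2m} − x_{(i−1) mod 2m}) dx = (∫_{[0,1]^m} ∏_{j=0}^{m−1} f(y_{(j+1) mod m} − y_j) dy)²; that is, for even L the second-order-coupled integral decouples into the square of a first-order-coupled integral of half the dimension. -/
open MeasureTheory

/-- The splitting of `Fin (2 * m)` into its even elements `2 * j` and its odd elements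
`2 * j + 1`. -/
noncomputable def finEvenOddEquiv (m : ℕ) : Fin m ⊕ Fin m ≃ Fin (2 * m) :=
  Equiv.ofBijective
    (Sum.elim (fun j => ⟨2 * j.val, by omega⟩) (fun j => ⟨2 * j.val + 1, by omega⟩)) <| by
    rw [Fintype.bijective_iff_injective_and_card]
    refine ⟨?_, by simp [two_mul]⟩
    rintro (a | a) (b | b) h <;> simp [Fin.ext_iff] at h ⊢ <;> omega

lemma finEvenOddEquiv_inl_val {m : ℕ} (j : Fin m) :
    (finEvenOddEquiv m (Sum.inl j)).val = 2 * j.val := rfl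

lemma finEvenOddEquiv_inr_val {m : ℕ} (j : Fin m) :
    (finEvenOddEquiv m (Sum.inr j)).val = 2 * j.val + 1 := rfl

lemma finEvenOddEquiv_inl_add_one {m : ℕ} [NeZero m] (j : Fin m) :
    finEvenOddEquiv m (Sum.inl j) + 1 = finEvenOddEquiv m (Sum.inr j) := by
  have hj := j.isLt
  ext
  rw [Fin.val_add, finEvenOddEquiv_inl_val, finEvenOddEquiv_inr_val, Fin.val_one',
    Nat.add_mod_mod, Nat.mod_eq_of_lt (by omega)]

lemma finEvenOddEquiv_inr_add_one {m : ℕ} [NeZero m] (j : Fin m) :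
    finEvenOddEquiv m (Sum.inr j) + 1 = finEvenOddEquiv m (Sum.inl (j + 1)) := by
  ext
  rw [Fin.val_add, finEvenOddEquiv_inl_val, finEvenOddEquiv_inr_val, Fin.val_one',
    Nat.add_mod_mod, Fin.val_add, Fin.val_one', Nat.add_mod_mod, ← Nat.mul_mod_mul_left]
  rfl

/-- A product with second-order cyclic coupling over an even number of variables splits into
two products with first-order cyclic coupling, in the even and in the odd variables. -/
lemma prod_sub_second_order_eq_mul {m : ℕ} [NeZero m] {A M : Type*} [AddGroup A] [CommMonoid M]
    (f : A → M) (x : Fin (2 * m) → A) :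
    ∏ i, f (x (i + 1) - x (i - 1)) =
      (∏ j : Fin m,
          f (x (finEvenOddEquiv m (Sum.inl (j + 1))) - x (finEvenOddEquiv m (Sum.inl j)))) *
        ∏ j : Fin m,
          f (x (finEvenOddEquiv m (Sum.inr (j + 1))) - x (finEvenOddEquiv m (Sum.inr j))) := by
  rw [← (finEvenOddEquiv m).prod_comp, Fintype.prod_sum_type, mul_comm]
  congr 1
  · refine Finset.prod_congr rfl fun j _ => ?_
    rw [finEvenOddEquiv_inr_add_one, ← finEvenOddEquiv_inl_add_one, add_sub_cancel_right]
  · rw [← Equiv.prod_comp (Equiv.addRight (1 : Fin m))]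
    refine Finset.prod_congr rfl fun j _ => ?_
    rw [Equiv.coe_addRight, finEvenOddEquiv_inl_add_one, ← finEvenOddEquiv_inr_add_one,
      add_sub_cancel_right]

/-- Fubini on the unit cube for a product of functions of two complementary groups of
coordinates. -/
lemma setIntegral_Icc_mul_of_sum_equiv {α β γ : Type*} [Fintype α] [Fintype β] [Fintype γ]
    (e : α ⊕ β ≃ γ) (g : (α → ℝ) → ℂ) (h : (β → ℝ) → ℂ) :
    ∫ x in Set.Icc (0 : γ → ℝ) 1, g (fun a => x (e (Sum.inl a))) * h (fun b => x (e (Sum.inr b))) =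
      (∫ y in Set.Icc (0 : α → ℝ) 1, g y) * ∫ z in Set.Icc (0 : β → ℝ) 1, h z := by
  let φ : (γ → ℝ) ≃ᵐ (α → ℝ) × (β → ℝ) :=
    (MeasurableEquiv.piCongrLeft (fun _ => ℝ) e).symm.trans
      (MeasurableEquiv.sumPiEquivProdPi fun _ => ℝ)
  have hφ : MeasurePreserving φ :=
    (volume_measurePreserving_sumPiEquivProdPi fun _ => ℝ).comp
      ((volume_measurePreserving_piCongrLeft (fun _ => ℝ) e).symm _)
  have hpre : φ ⁻¹' (Set.Icc 0 1 ×ˢ Set.Icc 0 1) = Set.Icc (0 : γ → ℝ) 1 := by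
    ext x
    have hx : x ∈ Set.Icc (0 : γ → ℝ) 1 ↔ ∀ c, x c ∈ Set.Icc (0 : ℝ) 1 := by
      simp [Pi.le_def, forall_and]
    rw [hx, ← e.forall_congr_right, Sum.forall]
    change (((fun a => x (e (Sum.inl a))) ∈ Set.Icc (0 : α → ℝ) 1) ∧
      ((fun b => x (e (Sum.inr b))) ∈ Set.Icc (0 : β → ℝ) 1)) ↔ _
    simp [Pi.le_def, forall_and]
  rw [← setIntegral_prod_mul, ← Measure.volume_eq_prod, ← hpre,
    ← hφ.setIntegral_preimage_emb φ.measurableEmbedding]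
  rfl

theorem stmt14 (m : ℕ) [NeZero m] (f : ℝ → ℂ)
    (hper : ∀ x : ℝ, f (x + 1) = f x)
    (hint : IntegrableOn f (Set.Icc (0 : ℝ) 1))
    (hbd : ∃ C : ℝ, ∀ x : ℝ, ‖f x‖ ≤ C) :
    (∫ x in Set.Icc (0 : Fin (2 * m) → ℝ) 1,
        ∏ i, f (x (i + 1) - x (i - 1))) =
      (∫ y in Set.Icc (0 : Fin m → ℝ) 1, ∏ j, f (y (j + 1) - y j)) ^ 2 := by
  simp_rw [prod_sub_second_order_eq_mul]
  rw [sq]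
  exact setIntegral_Icc_mul_of_sum_equiv (finEvenOddEquiv m)
    (fun y => ∏ j, f (y (j + 1) - y j)) (fun y => ∏ j, f (y (j + 1) - y j))
end

section
/- Let L ≥ 1 be odd and let f : ℝ → ℂ be a 1-periodic function integrable on [0,1] and bounded. Then ∫_{[0,1]^L} ∏_{i=0}^{L−1} f(x_{(i+1) mod L} − x_{(i−1) mod L}) dx = ∫_{[0,1]^L} ∏_{j=0}^{L−1} f(y_{(j+1) mod L} − y_j) dy; that is, for odd L the second-order-coupled integral equals the first-order-coupled integral in the same dimension. -/
/-- Doubling is a bijection of `Fin L` when `L` is odd. -/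
theorem Fin.bijective_add_self {L : ℕ} [NeZero L] (hodd : Odd L) :
    Function.Bijective fun i : Fin L => i + i := by
  rw [← Finite.injective_iff_bijective]
  obtain ⟨k, hk⟩ := hodd
  have hcancel : ∀ a : Fin L, (k + 1) • (a + a) = a := by
    intro a
    have hzero : L • a = 0 := by simpa using card_nsmul_eq_zero' (x := a)
    calc (k + 1) • (a + a) = (2 * k + 1) • a + a := by
          rw [← two_nsmul, ← mul_nsmul, ← succ_nsmul]
          congr 1
      _ = a := by rw [← hk, hzero, zero_add]
  intro a b hab
  rw [← hcancel a, ← hcancel b]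
  exact congrArg ((k + 1) • ·) hab

open MeasureTheory

theorem stmt15 (L : ℕ) [NeZero L] (hodd : Odd L) (f : ℝ → ℂ)
    (hper : ∀ x : ℝ, f (x + 1) = f x)
    (hint : IntegrableOn f (Set.Icc (0 : ℝ) 1))
    (hbd : ∃ C : ℝ, ∀ x : ℝ, ‖f x‖ ≤ C) :
    (∫ x in Set.Icc (0 : Fin L → ℝ) 1, ∏ i, f (x (i + 1) - x (i - 1))) =
      ∫ y in Set.Icc (0 : Fin L → ℝ) 1, ∏ j, f (y (j + 1) - y j) := by
  let σ : Fin L ≃ Fin L := Equiv.ofBijective _ (Fin.bijective_add_self hodd)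
  let e := MeasurableEquiv.piCongrLeft (fun _ : Fin L => ℝ) σ.symm
  have he : ∀ x j, e x j = x (j + j) := by
    intro x j
    have h := MeasurableEquiv.piCongrLeft_apply_apply (β := fun _ : Fin L => ℝ) σ.symm x (σ j)
    rwa [σ.symm_apply_apply] at h
  have hpre : e ⁻¹' Set.Icc 0 1 = Set.Icc 0 1 := by
    ext x
    simp only [Set.mem_preimage, Set.mem_Icc, Pi.le_def, he]
    exact and_congr (σ.forall_congr_right (q := fun i => (0 : Fin L → ℝ) i ≤ x i))
      (σ.forall_congr_right (q := fun i => x i ≤ (1 : Fin L → ℝ) i))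
  rw [← (volume_measurePreserving_piCongrLeft (fun _ : Fin L => ℝ)
    σ.symm).setIntegral_preimage_emb e.measurableEmbedding
    (fun y => ∏ j, f (y (j + 1) - y j)), hpre]
  congr 1 with x
  rw [← (σ.trans (Equiv.addRight 1)).prod_comp]
  refine Finset.prod_congr rfl fun j _ => ?_
  change f (x (j + j + 1 + 1) - x (j + j + 1 - 1)) = f (e x (j + 1) - e x j)
  rw [he, he, add_sub_cancel_right, add_add_add_comm, add_assoc (j + j)]
end

section
/- Let L ≥ 1 and let h = (h_{i,j})_{0≤i,j≤L−1} ∈ ℤ^{L²}. Then ∫_{[0,1]^{2L²}} exp(2πi ∑_{i=0}^{L−1} ∑_{j=0}^{L−1} h_{i,j} (x^a_{i,j} − x^a_{i,(j+1) mod L} − x^b_{i,j} + x^b_{(i+1) mod L,j})) dx^a dx^b equals 1 if all the components h_{i,j} are equal to one another, and equals 0 otherwise. -/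
open MeasureTheory

/-- The Fourier orthogonality relation on the unit interval. -/
theorem integral_Icc_exp_two_pi_int_mul (k : ℤ) :
    (∫ t in Set.Icc (0 : ℝ) 1, Complex.exp (2 * Real.pi * Complex.I * (k * t))) =
      if k = 0 then 1 else 0 := by
  rw [integral_Icc_eq_integral_Ioc, ← intervalIntegral.integral_of_le zero_le_one]
  split_ifs with hk
  · simp [hk]
  · have hc : (2 * Real.pi * Complex.I * k : ℂ) ≠ 0 :=
      mul_ne_zero Complex.two_pi_I_ne_zero (Int.cast_ne_zero.mpr hk)
    simp_rw [← mul_assoc]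
    rw [integral_exp_mul_complex hc]
    have he : Complex.exp (2 * Real.pi * Complex.I * k) = 1 :=
      Complex.exp_eq_one_iff.mpr ⟨k, by ring⟩
    simp [he]

/-- The integral over a unit cube of a product of one-variable functions. -/
theorem integral_Icc_zero_one_prod_prod {ι κ : Type*} [Fintype ι] [Fintype κ]
    (f : ι → κ → ℝ → ℂ) :
    (∫ x in Set.Icc (0 : ι → κ → ℝ) 1, ∏ i, ∏ j, f i j (x i j)) =
      ∏ i, ∏ j, ∫ t in Set.Icc (0 : ℝ) 1, f i j t := by
  rw [← Set.pi_univ_Icc, volume_pi, Measure.restrict_pi_pi,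
    integral_fintype_prod_eq_prod (fun i (y : κ → ℝ) => ∏ j, f i j (y j))]
  refine Finset.prod_congr rfl fun i _ => ?_
  rw [← Set.pi_univ_Icc, volume_pi, Measure.restrict_pi_pi,
    integral_fintype_prod_eq_prod]
  rfl

/-- The Fourier orthogonality relation on a unit cube with doubly indexed coordinates. -/
theorem integral_Icc_exp_two_pi_sum_sum {ι κ : Type*} [Fintype ι] [Fintype κ]
    (k : ι → κ → ℤ) [Decidable (∀ i j, k i j = 0)] :
    (∫ x in Set.Icc (0 : ι → κ → ℝ) 1,
        Complex.exp (2 * Real.pi * Complex.I * ∑ i, ∑ j, (k i j : ℂ) * (x i j : ℂ))) =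
      if ∀ i j, k i j = 0 then 1 else 0 := by
  simp_rw [Finset.mul_sum, Complex.exp_sum]
  rw [integral_Icc_zero_one_prod_prod
    (fun i j t => Complex.exp (2 * Real.pi * Complex.I * (k i j * t)))]
  simp_rw [integral_Icc_exp_two_pi_int_mul]
  simp [Finset.prod_ite_zero]

/-- A function on the cyclic group `Fin L` invariant under translation by `1` is constant. -/
theorem Fin.eq_apply_zero_of_apply_add_one {L : ℕ} [NeZero L] {α : Type*} {f : Fin L → α}
    (hf : ∀ j, f (j + 1) = f j) (j : Fin L) : f j = f 0 := by
  obtain _ | n := L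
  · exact j.elim0
  · induction j using Fin.induction with
    | zero => rfl
    | succ j ih => rw [← Fin.coeSucc_eq_succ, hf, ih]

/-- Summation by parts on the discrete torus. -/
theorem sum_sum_mul_plaquette {L : ℕ} [NeZero L] {R : Type*} [CommRing R]
    (h a b : Fin L → Fin L → R) :
    ∑ i, ∑ j, h i j * (a i j - a i (j + 1) - b i j + b (i + 1) j) =
      (∑ i, ∑ j, (h i j - h i (j - 1)) * a i j) +
        ∑ i, ∑ j, (h (i - 1) j - h i j) * b i j := by
  have ha : ∑ i, ∑ j, h i j * a i (j + 1) = ∑ i, ∑ j, h i (j - 1) * a i j :=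
    Finset.sum_congr rfl fun i _ =>
      Fintype.sum_equiv (Equiv.addRight 1) _ _ fun j => by simp
  have hb : ∑ i, ∑ j, h i j * b (i + 1) j = ∑ i, ∑ j, h (i - 1) j * b i j :=
    Fintype.sum_equiv (Equiv.addRight 1) _ _ fun i => by simp
  simp only [mul_add, mul_sub, sub_mul, Finset.sum_add_distrib, Finset.sum_sub_distrib, ha, hb]
  ring

theorem stmt17 (L : ℕ) [NeZero L] (h : Fin L → Fin L → ℤ) :
    (∫ x in Set.Icc (0 : (Fin L → Fin L → ℝ) × (Fin L → Fin L → ℝ)) 1,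
        Complex.exp (2 * Real.pi * Complex.I *
          ∑ i, ∑ j, (h i j : ℂ) *
            ((x.1 i j - x.1 i (j + 1) - x.2 i j + x.2 (i + 1) j : ℝ) : ℂ))) =
      if ∀ i j i' j' : Fin L, h i j = h i' j' then 1 else 0 := by
  have hsplit (x : (Fin L → Fin L → ℝ) × (Fin L → Fin L → ℝ)) :
      Complex.exp (2 * Real.pi * Complex.I * ∑ i, ∑ j, (h i j : ℂ) *
          ((x.1 i j - x.1 i (j + 1) - x.2 i j + x.2 (i + 1) j : ℝ) : ℂ)) =
        Complex.exp (2 * Real.pi * Complex.I *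
            ∑ i, ∑ j, ((h i j - h i (j - 1) : ℤ) : ℂ) * (x.1 i j : ℂ)) *
          Complex.exp (2 * Real.pi * Complex.I *
            ∑ i, ∑ j, ((h (i - 1) j - h i j : ℤ) : ℂ) * (x.2 i j : ℂ)) := by
    rw [← Complex.exp_add, ← mul_add]
    push_cast
    rw [sum_sum_mul_plaquette (fun i j => (h i j : ℂ)) (fun i j => (x.1 i j : ℂ))
      (fun i j => (x.2 i j : ℂ))]
  have hIcc : Set.Icc (0 : (Fin L → Fin L → ℝ) × (Fin L → Fin L → ℝ)) 1 =
      Set.Icc 0 1 ×ˢ Set.Icc 0 1 := Set.Icc_prod_eq _ _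
  simp_rw [hsplit]
  rw [hIcc, Measure.volume_eq_prod, setIntegral_prod_mul
    (fun y : Fin L → Fin L → ℝ => Complex.exp (2 * Real.pi * Complex.I *
      ∑ i, ∑ j, ((h i j - h i (j - 1) : ℤ) : ℂ) * (y i j : ℂ)))
    (fun y : Fin L → Fin L → ℝ => Complex.exp (2 * Real.pi * Complex.I *
      ∑ i, ∑ j, ((h (i - 1) j - h i j : ℤ) : ℂ) * (y i j : ℂ))),
    integral_Icc_exp_two_pi_sum_sum, integral_Icc_exp_two_pi_sum_sum,
    ite_zero_mul_ite_zero, mul_one]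
  refine if_congr ⟨fun ⟨ha, hb⟩ => ?_, fun hh => ?_⟩ rfl rfl
  · have hcol (i j : Fin L) : h i j = h i 0 :=
      Fin.eq_apply_zero_of_apply_add_one (f := h i)
        (fun j => by simpa [sub_eq_zero] using ha i (j + 1)) j
    have hrow (i : Fin L) : h i 0 = h 0 0 :=
      Fin.eq_apply_zero_of_apply_add_one (f := fun i => h i 0)
        (fun i => by simpa using (sub_eq_zero.mp (hb (i + 1) 0)).symm) i
    intro i j i' j'
    rw [hcol i j, hcol i' j', hrow i, hrow i']
  · exact ⟨fun i j => sub_eq_zero.mpr (hh _ _ _ _), fun i j => sub_eq_zero.mpr (hh _ _ _ _)⟩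
end
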